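/- arXiv:1504.05821 — 3 statements merged into one kernel-verified Lean document; each statement's English description precedes it below -/
import Mathlib

section
/- Let A be a finite alphabet, σ : A* → A* a primitive substitution, and x an infinite word over A that is an aperiodic fixed point of σ. Then there exist a finite set C of colors, a factor coloring c : Fact(x) → C, and a positive integer h such that no nonempty prefix of x admits a monotone c-monochromatic factorization of length h. -/
/-- The factor of the infinite word `x` of length `n` starting at position `i`,
i.e. the word `x_i x_{i+1} ⋯ x_{i+n-1}`. -/
def seg {A : Type*} (x : ℕ → A) (i n : ℕ) : List A :=
  (List.range n).map fun k => x (i + k)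

/-- `u` is a (nonempty, finite) factor of the infinite word `x`. -/
def IsFactor {A : Type*} (x : ℕ → A) (u : List A) : Prop :=
  u ≠ [] ∧ ∃ i, u = seg x i u.length

/-- `u` is a (finite) prefix of the infinite word `x`. -/
def IsPrefixOf {A : Type*} (x : ℕ → A) (u : List A) : Prop :=
  u = seg x 0 u.length

/-- The finite word `u` occurs in the finite word `v` at position `i`. -/
def OccursAt {A : Type*} (u v : List A) (i : ℕ) : Prop :=
  i + u.length ≤ v.length ∧ (v.drop i).take u.length = u

/-- `w` is a return word to `u` in `x`: `w` is nonempty, `w ++ u` is a factor of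
`x`, and `u` occurs exactly twice in `w ++ u`. -/
def IsReturn {A : Type*} (x : ℕ → A) (u w : List A) : Prop :=
  w ≠ [] ∧ IsFactor x (w ++ u) ∧ {i | OccursAt u (w ++ u) i}.ncard = 2

/-- The set of return words to `u` in `x`. -/
def Ret {A : Type*} (x : ℕ → A) (u : List A) : Set (List A) :=
  {w | IsReturn x u w}

/-- `x` is uniformly recurrent: every factor has a nonempty and finite set of
return words. -/
def UniformlyRecurrent {A : Type*} (x : ℕ → A) : Prop :=
  ∀ u, IsFactor x u → (Ret x u).Nonempty ∧ (Ret x u).Finite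

/-- `x` is aperiodic: there is no `n ≥ 1` with `x (i + n) = x i` for all `i`. -/
def Aperiodic {A : Type*} (x : ℕ → A) : Prop :=
  ¬ ∃ n : ℕ, 1 ≤ n ∧ ∀ i : ℕ, x (i + n) = x i

/-- Apply a substitution (given by its action `σ` on letters) to a finite word. -/
def substApply {A : Type*} (σ : A → List A) (w : List A) : List A :=
  (w.map σ).flatten

/-- `σ^n` applied to a letter. -/
def substIter {A : Type*} (σ : A → List A) : ℕ → A → List A
  | 0, a => [a]
  | n + 1, a => substApply σ (substIter σ n a)

/-- The substitution `σ` is primitive: some power `σ^n` maps every letter to a word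
containing every letter. -/
def Primitive {A : Type*} (σ : A → List A) : Prop :=
  ∃ n : ℕ, ∀ a b : A, a ∈ substIter σ n b

/-- The infinite word `x` is a fixed point of the substitution `σ`: applying `σ`
letterwise to `x` and concatenating gives back `x`, i.e. the image of every finite
prefix of `x` is again a prefix of `x`. -/
def IsFixedPoint {A : Type*} (σ : A → List A) (x : ℕ → A) : Prop :=
  ∀ n : ℕ, IsPrefixOf x (substApply σ (seg x 0 n))

/-- `w` occurs in `x` at position `a`. -/
def OccX {A : Type*} (x : ℕ → A) (a : ℕ) (w : List A) : Prop :=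
  ∀ t (h : t < w.length), w[t] = x (a + t)

lemma occX_seg {A : Type*} (x : ℕ → A) (a n : ℕ) : OccX x a (seg x a n) := by
  intro t h
  simp [seg]

lemma seg_length {A : Type*} (x : ℕ → A) (a n : ℕ) : (seg x a n).length = n := by
  simp [seg]

lemma occX_of_prefix {A : Type*} {x : ℕ → A} {w : List A} (h : IsPrefixOf x w) :
    OccX x 0 w := by
  rw [h]; exact occX_seg _ _ _

lemma prefix_of_occX {A : Type*} {x : ℕ → A} {w : List A} (h : OccX x 0 w) :
    IsPrefixOf x w := by
  apply List.ext_getElem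
  · rw [seg_length]
  · intro t h1 h2
    rw [h t h1, occX_seg x 0 _ t h2]

lemma occX_left {A : Type*} {x : ℕ → A} {a : ℕ} {u v : List A} (h : OccX x a (u ++ v)) :
    OccX x a u := by
  intro t ht
  have := h t (by simp; omega)
  rwa [List.getElem_append_left ht] at this

lemma occX_right {A : Type*} {x : ℕ → A} {a : ℕ} {u v : List A} (h : OccX x a (u ++ v)) :
    OccX x (a + u.length) v := by
  intro t ht
  have := h (u.length + t) (by simp; omega)
  rw [List.getElem_append_right (by omega)] at this
  simpa [add_assoc] using this

lemma occX_flatten {A : Type*} {x : ℕ → A} {a : ℕ} {Ls : List (List A)}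
    (h : OccX x a Ls.flatten) (i : ℕ) (hi : i < Ls.length) :
    OccX x (a + (Ls.take i).flatten.length) Ls[i] := by
  have e : Ls = Ls.take i ++ Ls[i] :: Ls.drop (i+1) := by simp
  have e2 : Ls.flatten = (Ls.take i).flatten ++ (Ls[i] ++ (Ls.drop (i+1)).flatten) := by
    have := congrArg List.flatten e
    rwa [List.flatten_append, List.flatten_cons] at this
  rw [e2] at h
  exact occX_left (occX_right h)

lemma take_flatten_length {A : Type*} {Ls : List (List A)} {n : ℕ} (i : ℕ) (hi : i ≤ Ls.length)
    (h : ∀ j (hj : j < Ls.length), j < i → Ls[j].length = n) :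
    (Ls.take i).flatten.length = i * n := by
  induction i with
  | zero => simp
  | succ i ih =>
    rw [List.take_succ_eq_append_getElem (by omega), List.flatten_append, List.length_append,
      ih (by omega) (fun j hj hji => h j hj (by omega))]
    simp [h i (by omega) (by omega)]
    ring

lemma substApply_append {A : Type*} (σ : A → List A) (u v : List A) :
    substApply σ (u ++ v) = substApply σ u ++ substApply σ v := by
  simp [substApply]

/-- `σ^n` on words -/
def wordIter {A : Type*} (σ : A → List A) (n : ℕ) (w : List A) : List A :=
  (w.map (substIter σ n)).flatten

lemma wordIter_append {A : Type*} (σ : A → List A) (n : ℕ) (u v : List A) :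
    wordIter σ n (u ++ v) = wordIter σ n u ++ wordIter σ n v := by
  simp [wordIter]

lemma wordIter_zero {A : Type*} (σ : A → List A) (w : List A) : wordIter σ 0 w = w := by
  induction w with
  | nil => rfl
  | cons a w ih => simpa [wordIter, substIter] using ih

lemma wordIter_succ {A : Type*} (σ : A → List A) (n : ℕ) (w : List A) :
    wordIter σ (n+1) w = substApply σ (wordIter σ n w) := by
  induction w with
  | nil => rfl
  | cons a w ih =>
    have e : ∀ m, wordIter σ m (a :: w) = substIter σ m a ++ wordIter σ m w := by
      intro m; simp [wordIter]
    rw [e, e, substApply_append, ih]; rfl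

lemma wordIter_add {A : Type*} (σ : A → List A) (m n : ℕ) (w : List A) :
    wordIter σ (m+n) w = wordIter σ m (wordIter σ n w) := by
  induction m with
  | zero => simp [wordIter_zero]
  | succ m ih => rw [show m + 1 + n = (m + n) + 1 by omega, wordIter_succ, wordIter_succ, ih]

lemma wordIter_single {A : Type*} (σ : A → List A) (n : ℕ) (a : A) :
    wordIter σ n [a] = substIter σ n a := by
  simp [wordIter]

lemma substIter_add {A : Type*} (σ : A → List A) (m n : ℕ) (a : A) :
    substIter σ (m+n) a = wordIter σ m (substIter σ n a) := by
  rw [← wordIter_single, wordIter_add, wordIter_single]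

lemma wordIter_length_le {A : Type*} (σ : A → List A) (n B : ℕ)
    (h : ∀ a, (substIter σ n a).length ≤ B) (w : List A) :
    (wordIter σ n w).length ≤ w.length * B := by
  induction w with
  | nil => simp [wordIter]
  | cons a w ih =>
    have e : wordIter σ n (a :: w) = substIter σ n a ++ wordIter σ n w := by simp [wordIter]
    rw [e, List.length_append, List.length_cons]
    have := h a
    nlinarith

lemma le_wordIter_length {A : Type*} (σ : A → List A) (n B : ℕ)
    (h : ∀ a, B ≤ (substIter σ n a).length) (w : List A) :
    w.length * B ≤ (wordIter σ n w).length := by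
  induction w with
  | nil => simp [wordIter]
  | cons a w ih =>
    have e : wordIter σ n (a :: w) = substIter σ n a ++ wordIter σ n w := by simp [wordIter]
    rw [e, List.length_append, List.length_cons]
    have := h a
    nlinarith

lemma mem_wordIter_length {A : Type*} (σ : A → List A) (n : ℕ) (w : List A) (a : A)
    (h : a ∈ w) : (substIter σ n a).length ≤ (wordIter σ n w).length := by
  obtain ⟨u, v, rfl⟩ := List.append_of_mem h
  simp [wordIter]
  omega

lemma exists_bound {A : Type*} [Fintype A] (f : A → ℕ) : ∃ B, ∀ a, f a ≤ B :=
  ⟨∑ a, f a, fun a => Finset.single_le_sum (f := f) (fun _ _ => Nat.zero_le _) (Finset.mem_univ a)⟩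

lemma exists_scale {A : Type*} [Fintype A] (σ : A → List A)
    (hprim : Primitive σ) (hA : Nontrivial A) :
    ∃ C : ℕ, ∀ d : ℕ, 1 ≤ d → ∃ n, ∀ a, d ≤ (substIter σ n a).length ∧
      (substIter σ n a).length ≤ C * d := by
  classical
  obtain ⟨N, hN⟩ := hprim
  obtain ⟨L, hL⟩ := exists_bound (fun a => (substIter σ 1 a).length)
  obtain ⟨B, hB⟩ := exists_bound (fun a => (substIter σ N a).length)
  -- comparability
  have hcomp : ∀ n a b, (substIter σ n a).length ≤ (substIter σ n b).length * B := by
    intro n a b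
    calc (substIter σ n a).length ≤ (wordIter σ n (substIter σ N b)).length :=
          mem_wordIter_length σ n _ a (hN a b)
      _ = (wordIter σ N (substIter σ n b)).length := by
          rw [← substIter_add, ← substIter_add, add_comm]
      _ ≤ _ := wordIter_length_le σ N B hB _
  have h2 : ∀ b, 2 ≤ (substIter σ N b).length := by
    intro b
    obtain ⟨p, q, hpq⟩ := hA
    have h1 : ({p, q} : Finset A) ⊆ (substIter σ N b).toFinset := by
      intro z _; simpa using hN z b
    calc 2 = ({p, q} : Finset A).card := (Finset.card_pair hpq).symm
      _ ≤ _ := Finset.card_le_card h1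
      _ ≤ _ := List.toFinset_card_le _
  have hgrow : ∀ j b, 2 ^ j ≤ (substIter σ (j * N) b).length := by
    intro j
    induction j with
    | zero => intro b; simp [substIter]
    | succ j ih =>
      intro b
      rw [show (j+1) * N = j * N + N by ring, substIter_add]
      have := le_wordIter_length σ (j * N) _ ih (substIter σ N b)
      have := h2 b
      rw [pow_succ]
      nlinarith [Nat.pos_of_ne_zero (pow_ne_zero j (two_ne_zero (α := ℕ)))]
  refine ⟨B * L + 1, fun d hd => ?_⟩
  have hex : ∃ n, ∀ a, d ≤ (substIter σ n a).length :=
    ⟨d * N, fun a => (Nat.lt_two_pow_self).le.trans (hgrow d a)⟩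
  refine ⟨Nat.find hex, fun a => ⟨Nat.find_spec hex a, ?_⟩⟩
  rcases hn : Nat.find hex with _ | n
  · simp only [substIter, List.length_singleton]; exact Nat.mul_pos (Nat.succ_pos _) hd
  · have := Nat.find_min hex (m := n) (by omega)
    push Not at this
    obtain ⟨b, hb⟩ := this
    have h1 : (substIter σ (n+1) a).length ≤ (substIter σ n a).length * L := by
      rw [add_comm, substIter_add]
      exact wordIter_length_le σ 1 L hL _
    have h3 := hcomp n a b
    calc _ ≤ _ := h1
      _ ≤ ((substIter σ n b).length * B) * L := Nat.mul_le_mul_right _ h3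
      _ ≤ (d * B) * L := by gcongr
      _ ≤ _ := by nlinarith

lemma fixed_iter {A : Type*} (σ : A → List A) (x : ℕ → A) (hfix : IsFixedPoint σ x) (n m : ℕ) :
    OccX x 0 (wordIter σ n (seg x 0 m)) := by
  induction n with
  | zero => rw [wordIter_zero]; exact occX_seg _ _ _
  | succ n ih =>
    rw [wordIter_succ, prefix_of_occX ih]
    exact occX_of_prefix (hfix _)

lemma exists_pair_bound {A : Type*} [Fintype A] (x : ℕ → A) :
    ∃ R, ∀ m, ∃ r ≤ R, x r = x m ∧ x (r+1) = x (m+1) := by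
  classical
  have : ∀ p : A × A, ∃ r, (∃ m, p = (x m, x (m+1))) → p = (x r, x (r+1)) := by
    intro p
    by_cases h : ∃ m, p = (x m, x (m+1))
    · obtain ⟨m, hm⟩ := h; exact ⟨m, fun _ => hm⟩
    · exact ⟨0, fun h' => absurd h' h⟩
  choose f hf using this
  obtain ⟨R, hR⟩ := exists_bound f
  refine ⟨R, fun m => ⟨f (x m, x (m+1)), hR _, ?_⟩⟩
  have := hf (x m, x (m+1)) ⟨m, rfl⟩
  simp only [Prod.mk.injEq] at this
  exact ⟨this.1.symm, this.2.symm⟩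

lemma seg_succ {A : Type*} (x : ℕ → A) (a n : ℕ) : seg x a (n+1) = seg x a n ++ [x (a+n)] := by
  simp [seg, List.range_succ]

lemma power_free {A : Type*} [Fintype A] (σ : A → List A)
    (hprim : Primitive σ) (x : ℕ → A) (hfix : IsFixedPoint σ x) (hAp : Aperiodic x) :
    ∃ K : ℕ, 1 ≤ K ∧ ∀ d m, 1 ≤ d → (∀ j < m, x (j + d) = x j) → m < K * d := by
  have hA : Nontrivial A := by
    by_contra h
    rw [not_nontrivial_iff_subsingleton] at h
    exact hAp ⟨1, le_rfl, fun i => Subsingleton.elim _ _⟩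
  obtain ⟨C, hC⟩ := exists_scale σ hprim hA
  obtain ⟨R, hR⟩ := exists_pair_bound x
  refine ⟨C * (R + 1) + 1, by omega, fun d m hd hm => ?_⟩
  by_contra hlt
  push Not at hlt
  apply hAp
  refine ⟨d, hd, fun j => ?_⟩
  obtain ⟨n, hn⟩ := hC d hd
  set f : ℕ → ℕ := fun m => (wordIter σ n (seg x 0 m)).length with hf
  have hf1 : ∀ m, f (m+1) = f m + (substIter σ n (x m)).length := by
    intro m
    simp only [hf, seg_succ, wordIter_append, List.length_append, wordIter_single, zero_add]
  have hf0 : f 0 = 0 := by simp [hf, seg, wordIter]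
  have hocc : ∀ m, OccX x (f m) (substIter σ n (x m) ++ substIter σ n (x (m+1))) := by
    intro m
    have := fixed_iter σ x hfix n (m+2)
    rw [seg_succ, seg_succ, List.append_assoc, wordIter_append, wordIter_append,
      wordIter_single, wordIter_single] at this
    simpa using occX_right this
  have hfge : ∀ m, m ≤ f m := by
    intro m
    induction m with
    | zero => omega
    | succ m ih => have := hf1 m; have := (hn (x m)).1; omega
  have hfle : ∀ m, f m ≤ m * (C * d) := by
    intro m
    have := wordIter_length_le σ n (C*d) (fun a => (hn a).2) (seg x 0 m)
    rwa [seg_length] at this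
  have hex : ∃ m, j < f (m+1) := ⟨j, by have := hfge (j+1); omega⟩
  classical
  obtain ⟨m', hm1, hm2⟩ : ∃ m', f m' ≤ j ∧ j < f (m'+1) := by
    refine ⟨Nat.find hex, ?_, Nat.find_spec hex⟩
    rcases hq : Nat.find hex with _ | q
    · omega
    · have := Nat.find_min hex (m := q) (by omega)
      omega
  obtain ⟨r, hrR, hr1, hr2⟩ := hR m'
  obtain ⟨t, rfl⟩ := Nat.exists_eq_add_of_le hm1
  have hb0 := hf1 m'
  have hb1 := (hn (x (m'+1))).1
  have hb2 := (hn (x m')).2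
  have e : ∀ s, s < (substIter σ n (x m') ++ substIter σ n (x (m'+1))).length →
      x (f m' + s) = x (f r + s) := by
    intro s hs
    rw [← hocc m' s hs]
    have := hocc r
    rw [hr1, hr2] at this
    exact this s hs
  rw [add_assoc, e t (by rw [List.length_append]; omega),
    e (t+d) (by rw [List.length_append]; omega), ← add_assoc]
  apply hm
  have := hfle r
  have : r * (C * d) ≤ R * (C * d) := Nat.mul_le_mul_right _ hrR
  have : (C * (R+1) + 1) * d = R * (C * d) + C * d + d := by ring
  omega

/-- If `x` is an aperiodic fixed point of a primitive substitution over a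
finite alphabet, then there are a finite set `C` of colors, a factor coloring
`c : Fact(x) → C`, and a positive integer `h` such that no nonempty prefix of `x`
admits a monotone `c`-monochromatic factorization of length `h`. -/
theorem stmt1 {A : Type*} [Fintype A] (σ : A → List A) (hσ : ∀ a, σ a ≠ [])
    (hprim : Primitive σ) (x : ℕ → A) (hfix : IsFixedPoint σ x) (hAp : Aperiodic x) :
    ∃ (C : Type) (_ : Fintype C) (c : {u : List A // IsFactor x u} → C) (h : ℕ),
      1 ≤ h ∧
      ∀ w : List A, w ≠ [] → IsPrefixOf x w →
        ¬ ∃ U : Fin h → {u : List A // IsFactor x u},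
            w = (List.ofFn fun i => (U i).1).flatten ∧
            (∀ i j : Fin h, i ≤ j → (U i).1.length ≤ (U j).1.length) ∧
            (∀ i j : Fin h, c (U i) = c (U j)) := by
  classical
  obtain ⟨K, hK1, hK⟩ := power_free σ hprim x hfix hAp
  have hM0 : 0 < 2 * K * (K + 1) := by positivity
  have hQ0 : 0 < 2 * (K + 1) := by positivity
  let S : ℕ → Prop := fun n => ∀ t < 2 ^ Nat.log 2 n, x (n + t) = x t
  refine ⟨Bool × Bool × Fin (2 * K * (K + 1)) × Fin (2 * (K + 1)), inferInstance,
    fun u => (decide (IsPrefixOf x u.1), decide (S u.1.length),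
      ⟨Nat.log 2 u.1.length % (2 * K * (K + 1)), Nat.mod_lt _ hM0⟩,
      ⟨(u.1.length * (K + 1) / 2 ^ Nat.log 2 u.1.length) % (2 * (K + 1)), Nat.mod_lt _ hQ0⟩),
    K + 1, by omega, ?_⟩
  rintro w hw hwp ⟨U, hU, hmono, hcol⟩
  set Ls := List.ofFn fun i => (U i).1 with hLs
  have hlen : Ls.length = K + 1 := by simp [hLs]
  have hget : ∀ i (hi : i < Ls.length), Ls[i] = (U ⟨i, by omega⟩).1 := by
    intro i hi; simp only [hLs, List.getElem_ofFn]
  have hocc : ∀ i (hi : i < K + 1), OccX x ((Ls.take i).flatten.length) (U ⟨i, hi⟩).1 := by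
    intro i hi
    have h0 : OccX x 0 Ls.flatten := by rw [← hU]; exact occX_of_prefix hwp
    have := occX_flatten h0 i (by omega)
    rwa [hget, zero_add] at this
  have hpos : ∀ i, 0 < (U i).1.length := fun i => List.length_pos_iff.2 (U i).2.1
  set n := (U 0).1.length with hn
  have hn0 : 0 < n := hpos 0
  have hp0 : IsPrefixOf x (U 0).1 := by
    apply prefix_of_occX
    have := hocc 0 (by omega)
    simpa using this
  simp only [Prod.mk.injEq, decide_eq_decide, Fin.mk.injEq] at hcol
  have hpre : ∀ i, OccX x 0 (U i).1 := fun i => occX_of_prefix (((hcol 0 i).1).1 hp0)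
  have hn1 : ∀ i hi, (∀ j (hj : j < i), (U ⟨j, hj.trans hi⟩).1.length = n) →
      OccX x (i * n) (U ⟨i, hi⟩).1 := by
    intro i hi h
    have h1 := hocc i hi
    rwa [take_flatten_length (n := n) i (by omega)
      (fun j hj hji => by rw [hget]; exact h j hji)] at h1
  have hper : ∀ i hi, (∀ j (hj : j < i), (U ⟨j, hj.trans hi⟩).1.length = n) →
      ∀ t < (U ⟨i, hi⟩).1.length, x (i * n + t) = x t := by
    intro i hi h t ht
    rw [← hn1 i hi h t ht, hpre ⟨i, hi⟩ t ht, zero_add]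
  have hS0 : S n := by
    intro t ht
    have h1 := hper 1 (by omega) (fun j hj => by
      obtain rfl : j = 0 := by omega
      rfl) t
    rw [one_mul] at h1
    apply h1
    have h2 : n ≤ (U ⟨1, by omega⟩).1.length := hmono 0 _ (Fin.zero_le _)
    have h3 := Nat.pow_log_le_self 2 hn0.ne'
    omega
  have hS : ∀ i, S (U i).1.length := fun i => ((hcol 0 i).2.1).1 hS0
  have hall : ∀ i (hi : i < K + 1), (U ⟨i, hi⟩).1.length = n := by
    intro i
    induction i using Nat.strong_induction_on with
    | _ i ih =>
    intro hi
    rcases Nat.eq_zero_or_pos i with rfl | hi0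
    · rfl
    have hp := hper i hi (fun j hj => ih j hj _)
    have hc := hcol 0 ⟨i, hi⟩
    have hSi := hS ⟨i, hi⟩
    have hle : n ≤ (U ⟨i, hi⟩).1.length := hmono 0 _ (Fin.zero_le _)
    set m := (U ⟨i, hi⟩).1.length with hm
    have hm0 : m ≠ 0 := by omega
    have hlt : m < K * (i * n) := hK (i * n) m (Nat.mul_pos hi0 hn0)
      (fun j hj => by rw [add_comm]; exact hp j hj)
    have hn2 := Nat.lt_pow_succ_log_self (b := 2) (by norm_num) n
    have hn3 := Nat.pow_log_le_self 2 hn0.ne'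
    have hm2 := Nat.lt_pow_succ_log_self (b := 2) (by norm_num) m
    have hm3 := Nat.pow_log_le_self 2 hm0
    have hkle : Nat.log 2 n ≤ Nat.log 2 m := Nat.log_mono_right hle
    have hklt : Nat.log 2 m < Nat.log 2 n + 2 * K * (K + 1) := by
      rw [← Nat.pow_lt_pow_iff_right (a := 2) (by norm_num), pow_add]
      have h1 : 2 * K * (K + 1) < 2 ^ (2 * K * (K + 1)) := Nat.lt_two_pow_self
      calc 2 ^ Nat.log 2 m ≤ m := hm3
        _ < K * (i * n) := hlt
        _ ≤ K * ((K + 1) * 2 ^ (Nat.log 2 n + 1)) := by gcongr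
        _ = 2 ^ Nat.log 2 n * (2 * K * (K + 1)) := by ring
        _ ≤ _ := by gcongr
    have hk : Nat.log 2 m = Nat.log 2 n := by
      have h1 : Nat.log 2 n ≡ Nat.log 2 m [MOD (2 * K * (K + 1))] := hc.2.2.1
      have h2 := (Nat.modEq_iff_dvd' hkle).1 h1
      have h3 := Nat.eq_zero_of_dvd_of_lt h2 (by omega)
      omega
    have hbin := hc.2.2.2
    rw [← hn, hk] at hbin
    have hSn : ∀ t < 2 ^ Nat.log 2 n, x (n + t) = x t := hS0
    have hSm : ∀ t < 2 ^ Nat.log 2 m, x (m + t) = x t := hSi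
    rw [hk] at hSm hm2
    generalize hPdef : 2 ^ Nat.log 2 n = P at *
    have hP : 0 < P := by rw [← hPdef]; positivity
    rw [pow_succ, hPdef] at hn2 hm2
    rw [Nat.mod_eq_of_lt (by rw [Nat.div_lt_iff_lt_mul hP]; nlinarith),
      Nat.mod_eq_of_lt (by rw [Nat.div_lt_iff_lt_mul hP]; nlinarith)] at hbin
    by_contra hne
    obtain ⟨d, hd⟩ := Nat.exists_eq_add_of_le hle
    have hd0 : 1 ≤ d := by omega
    have h1 := hK d (P - d) hd0 (fun t ht => by
      rw [← hSn (t + d) (by omega), ← hSm t (by omega)]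
      congr 1; omega)
    have h2 : n * (K + 1) / P * P ≤ n * (K + 1) := Nat.div_mul_le_self _ _
    have h3 : m * (K + 1) < (m * (K + 1) / P + 1) * P := Nat.lt_mul_of_div_lt (by omega) hP
    rw [← hbin] at h3
    have h4 : d * (K + 1) < P := by rw [hd] at h3; nlinarith
    have h5 : d * (K + 1) = K * d + d := by ring
    omega
  have := hK n (K * n) hn0 (fun j hj => by
    have hj1 : j / n < K := by rw [Nat.div_lt_iff_lt_mul hn0]; exact hj
    have hj2 : j % n < n := Nat.mod_lt _ hn0
    have e1 := hper (j / n) (by omega) (fun j' _ => hall j' _) (j % n) (by rw [hall]; exact hj2)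
    have e2 := hper (j / n + 1) (by omega) (fun j' _ => hall j' _) (j % n)
      (by rw [hall]; exact hj2)
    have e3 := Nat.div_add_mod j n
    rw [show j / n * n + j % n = j by rw [mul_comm]; exact e3] at e1
    rw [show (j / n + 1) * n + j % n = j + n by rw [add_mul, mul_comm (j / n)]; omega] at e2
    rw [e1, e2])
  omega
end

section
/- Let x be an infinite word over a finite alphabet A and let c : Fact(x) → C be a factor coloring of x with C finite. Then there exists i ∈ ℕ and a strictly increasing sequence i = i_0 < i_1 < i_2 < ⋯ of natural numbers such that all the factors x_{[i_j, i_{j+k}-1]} for j ∈ ℕ and k ≥ 1 have the same color under c, and additionally i_{j+1} − i_j ≤ i_{j+2} − i_{j+1} for every j ∈ ℕ. That is, the tail x_{[i,∞)} admits a monotone strongly c-monochromatic infinite factorization. -/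
theorem ultra_const {C : Type*} [Finite C] (U : Ultrafilter ℕ) (f : ℕ → C) :
    ∃ a, ∀ᶠ n in (U : Filter ℕ), f n = a := by
  obtain ⟨a, ha⟩ := Ultrafilter.eq_pure_of_finite (U.map f)
  refine ⟨a, ?_⟩
  have h : ({a} : Set C) ∈ U.map f := by
    rw [ha]
    exact Ultrafilter.mem_pure.2 rfl
  exact Ultrafilter.mem_map.1 h

/-- Ramsey's theorem for pairs, with fast growing homogeneous set. -/
theorem ramsey_pairs {C : Type*} [Finite C] (d : ℕ → ℕ → C) :
    ∃ (a : C) (f : ℕ → ℕ), ∀ m n, m < n → d (f m) (f n) = a ∧ 2 * f m < f n := by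
  choose col hcol using fun i => ultra_const (Filter.hyperfilter ℕ) (d i)
  obtain ⟨a, ha⟩ := ultra_const (Filter.hyperfilter ℕ) col
  obtain ⟨f, -, hf⟩ := exists_seq_of_forall_finset_exists (fun n => col n = a)
    (fun m n => d m n = a ∧ 2 * m < n) (by
      intro s hs
      have h : ∀ᶠ n in (Filter.hyperfilter ℕ : Filter ℕ), ∀ m ∈ s, d m n = a ∧ 2 * m < n := by
        rw [Filter.eventually_all_finset]
        intro m hm
        have h1 := hcol m
        rw [hs m hm] at h1
        refine h1.and ?_
        have h2 := Filter.eventually_gt_atTop (2 * m)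
        rw [← Nat.cofinite_eq_atTop] at h2
        exact Filter.hyperfilter_le_cofinite h2
      exact (ha.and h).exists)
  exact ⟨a, f, hf⟩

/-- For every factor coloring `c` of an infinite word `x` over a finite
alphabet with finitely many colors, there exist `i ∈ ℕ` and a strictly increasing
sequence `i = i₀ < i₁ < i₂ < ⋯` such that all the factors `x_{[i_j, i_{j+k}-1]}` for
`j ∈ ℕ` and `k ≥ 1` have the same color, and moreover
`i_{j+1} - i_j ≤ i_{j+2} - i_{j+1}` for all `j`; i.e. the tail `x_{[i,∞)}` admits a
monotone strongly `c`-monochromatic infinite factorization. -/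
theorem stmt3 {A : Type*} {C : Type*} [Fintype A] [Finite C]
    (x : ℕ → A) (c : {u : List A // IsFactor x u} → C) :
    ∃ (i : ℕ) (f : ℕ → ℕ), f 0 = i ∧ StrictMono f ∧
      (∀ j : ℕ, f (j + 1) - f j ≤ f (j + 2) - f (j + 1)) ∧
      ∃ col : C, ∀ j k : ℕ, 1 ≤ k →
        ∀ hf : IsFactor x (seg x (f j) (f (j + k) - f j)),
          c ⟨seg x (f j) (f (j + k) - f j), hf⟩ = col := by
  classical
  have hC : Nonempty C := ⟨c ⟨seg x 0 1, by simp [seg], 0, by simp [seg]⟩⟩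
  obtain ⟨a, f, hf⟩ := ramsey_pairs (fun i j =>
    if h : IsFactor x (seg x i (j - i)) then c ⟨_, h⟩ else Classical.choice hC)
  refine ⟨f 0, f, rfl, strictMono_nat_of_lt_succ fun n => ?_, fun j => ?_, a, ?_⟩
  · have := (hf n (n + 1) (by omega)).2
    omega
  · have := (hf (j + 1) (j + 2) (by omega)).2
    omega
  · intro j k hk h
    have := (hf j (j + k) (by omega)).1
    rwa [dif_pos h] at this
end

section
/- Let h, k ≥ 1 and let H ∈ ℕ be such that every edge coloring of a complete graph on more than H vertices with at most k colors contains a monochromatic clique of size h+1. Let x be an infinite word over a finite alphabet A, let u be a nonempty finite word over A, and set y = u^H x. Then for every factor coloring c of y using at most k colors, there exist integers 0 = n_0 < n_1 < ⋯ < n_h such that all the factors y_{[n_i, n_j−1]} for 0 ≤ i < j ≤ h have the same color under c. In particular, some prefix of y admits a strongly c-monochromatic factorization of length h. -/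
/-- The infinite word obtained by prepending a finite word `w` to the infinite word `x`. -/
def prepend {A : Type*} (w : List A) (x : ℕ → A) : ℕ → A := fun n =>
  if h : n < w.length then w[n] else x (n - w.length)

theorem aux_length {A : Type*} (x : ℕ → A) (i n : ℕ) : (seg x i n).length = n := by
  simp [seg]

theorem aux_factor {A : Type*} (x : ℕ → A) (i n : ℕ) (hn : 0 < n) : IsFactor x (seg x i n) := by
  refine ⟨?_, i, ?_⟩
  · intro h0
    have := congrArg List.length h0
    rw [aux_length] at this
    simp at this
    omega
  · rw [aux_length]

theorem aux_append {A : Type*} (x : ℕ → A) (i n m : ℕ) :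
    seg x i n ++ seg x (i + n) m = seg x i (n + m) := by
  simp [seg, List.range_add, Function.comp_def, Nat.add_assoc]

theorem aux_flatten {A : Type*} (y : ℕ → A) (m : ℕ → ℕ) (hm : Monotone m) (i d : ℕ) :
    ((List.range' i d).map (fun t => seg y (m t) (m (t + 1) - m t))).flatten
      = seg y (m i) (m (i + d) - m i) := by
  induction d with
  | zero => simp [seg]
  | succ d ih =>
    have h1 : m i ≤ m (i + d) := hm (by omega)
    have h2 : m (i + d) ≤ m (i + d + 1) := hm (by omega)
    rw [List.range'_concat, List.map_append, List.flatten_append, ih]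
    have h3 := aux_append y (m i) (m (i + d) - m i) (m (i + d + 1) - m (i + d))
    rw [Nat.add_sub_cancel' h1] at h3
    have h4 : m (i + d) - m i + (m (i + d + 1) - m (i + d)) = m (i + (d + 1)) - m i := by
      rw [← Nat.add_assoc]; omega
    rw [h4] at h3
    simpa using h3

theorem aux_ofFn {B : Type*} (F : ℕ → B) (h i j : ℕ) (hj : j ≤ h) :
    ((List.ofFn fun t : Fin h => F t).take j).drop i = (List.range' i (j - i)).map F := by
  apply List.ext_getElem
  · simp; omega
  · intro n h1 h2
    simp

theorem aux_rep {A : Type*} (u : List A) (H n : ℕ) (hn : n < H * u.length) :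
    ((List.replicate H u).flatten)[n]? = u[n % u.length]? := by
  induction H generalizing n with
  | zero => simp at hn
  | succ H ih =>
    rw [List.replicate_succ, List.flatten_cons]
    by_cases hlt : n < u.length
    · rw [List.getElem?_append_left hlt, Nat.mod_eq_of_lt hlt]
    · push Not at hlt
      rw [List.getElem?_append_right hlt, ih, ← Nat.mod_eq_sub_mod hlt]
      rw [Nat.add_mul] at hn
      omega

theorem aux_prep {A : Type*} (u : List A) (H n : ℕ) (x : ℕ → A) (hn : n < H * u.length) :
    some (prepend ((List.replicate H u).flatten) x n) = u[n % u.length]? := by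
  have hl : n < ((List.replicate H u).flatten).length := by simpa using hn
  rw [← aux_rep u H n hn, prepend, dif_pos hl, List.getElem?_eq_getElem hl]

theorem aux_seg {A : Type*} (u : List A) (H a b : ℕ) (x : ℕ → A) (hab : a + b ≤ H) :
    seg (prepend ((List.replicate H u).flatten) x) (a * u.length) (b * u.length)
      = seg (prepend ((List.replicate H u).flatten) x) 0 (b * u.length) := by
  unfold seg
  apply List.map_congr_left
  intro t ht
  rw [List.mem_range] at ht
  have h1 : (a + b) * u.length ≤ H * u.length := Nat.mul_le_mul_right _ hab
  rw [Nat.add_mul] at h1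
  apply Option.some_injective
  rw [aux_prep _ _ _ _ (by omega), aux_prep _ _ _ _ (by omega)]
  simp

/-- Let `h, k ≥ 1` and let `H` be such that every edge coloring of a
complete graph on more than `H` vertices with at most `k` colors contains a
monochromatic clique of size `h + 1`. Let `x` be an infinite word over a finite
alphabet, `u` a nonempty finite word, and `y = u^H x`. Then for every factor coloring
`c` of `y` with at most `k` colors there exist `0 = n₀ < n₁ < ⋯ < n_h` such that all
factors `y_{[n_i, n_j - 1]}` for `i < j` get the same color; in particular, some
nonempty prefix of `y` admits a strongly `c`-monochromatic factorization of length `h`. -/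
theorem stmt5 {A : Type*} {C : Type*} [Fintype A] [Fintype C]
    (h k H : ℕ) (hh : 1 ≤ h) (hk : 1 ≤ k)
    (hH : ∀ N : ℕ, H < N → ∀ c' : Fin N → Fin N → Fin k,
      ∃ g : Fin (h + 1) → Fin N, StrictMono g ∧
        ∃ col : Fin k, ∀ i j : Fin (h + 1), i < j → c' (g i) (g j) = col)
    (x : ℕ → A) (u : List A) (hu : u ≠ [])
    (y : ℕ → A) (hy : y = prepend ((List.replicate H u).flatten) x)
    (hC : Fintype.card C ≤ k)
    (c : {v : List A // IsFactor y v} → C) :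
    (∃ n : Fin (h + 1) → ℕ, n 0 = 0 ∧ StrictMono n ∧
      ∃ col : C, ∀ i j : Fin (h + 1), i < j →
        ∀ hf : IsFactor y (seg y (n i) (n j - n i)),
          c ⟨seg y (n i) (n j - n i), hf⟩ = col) ∧
    (∃ w : List A, w ≠ [] ∧ IsPrefixOf y w ∧
      ∃ U : Fin h → {v : List A // IsFactor y v},
        w = (List.ofFn fun i => (U i).1).flatten ∧
        ∃ col : C, ∀ i j : ℕ, i < j → j ≤ h →
          ∀ hf : IsFactor y ((((List.ofFn fun t => (U t).1).take j).drop i).flatten),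
            c ⟨(((List.ofFn fun t => (U t).1).take j).drop i).flatten, hf⟩ = col) := by
  classical
  have hL : 0 < u.length := List.length_pos_of_ne_nil hu
  let c0 : C := c ⟨seg y 0 1, aux_factor y 0 1 one_pos⟩
  let ct : List A → C := fun v => if hv : IsFactor y v then c ⟨v, hv⟩ else c0
  have hct : ∀ v (hv : IsFactor y v), c ⟨v, hv⟩ = ct v := fun v hv => by simp [ct, hv]
  let e : C → Fin k := fun z => Fin.castLE hC (Fintype.equivFin C z)
  have he : Function.Injective e :=
    (Fin.castLE_injective hC).comp (Fintype.equivFin C).injective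
  obtain ⟨g, hg, col, hcol⟩ := hH (H + 1) (Nat.lt_succ_self H)
    (fun s t => e (ct (seg y 0 ((t.1 - s.1) * u.length))))
  have hg0 : ∀ i, (g 0).1 ≤ (g i).1 := fun i => hg.monotone (Fin.zero_le i)
  let n : Fin (h + 1) → ℕ := fun i => ((g i).1 - (g 0).1) * u.length
  have hn : StrictMono n := by
    intro i j hij
    have h1 : (g i).1 < (g j).1 := hg hij
    have h2 := hg0 i
    exact Nat.mul_lt_mul_of_pos_right (by omega) hL
  have hn0 : n 0 = 0 := by simp [n]
  have hseg : ∀ i j, i < j →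
      seg y (n i) (n j - n i) = seg y 0 (((g j).1 - (g i).1) * u.length) := by
    intro i j hij
    have h1 : (g i).1 < (g j).1 := hg hij
    have h2 := hg0 i
    have h3 := (g j).2
    have h4 : n j - n i = ((g j).1 - (g i).1) * u.length := by
      simp only [n]
      rw [← Nat.sub_mul]
      congr 1
      omega
    rw [h4, hy]
    exact aux_seg u H _ _ x (by omega)
  let l : Fin (h + 1) := Fin.last h
  have hl : (0 : Fin (h + 1)) < l := by
    rw [Fin.lt_def]; simp [l]; omega
  have key : ∀ i j : Fin (h + 1), i < j →
      ct (seg y (n i) (n j - n i)) = ct (seg y (n 0) (n l - n 0)) := by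
    intro i j hij
    apply he
    rw [hseg i j hij, hseg 0 l hl]
    exact (hcol i j hij).trans (hcol 0 l hl).symm
  refine ⟨⟨n, hn0, hn, _, fun i j hij hf => (hct _ hf).trans (key i j hij)⟩, ?_⟩
  let m : ℕ → ℕ := fun t => n ⟨min t h, by omega⟩
  have hm : Monotone m := by
    intro a b hab
    apply hn.monotone
    rw [Fin.le_def]
    simp only
    omega
  have hmn : ∀ t (ht : t ≤ h), m t = n ⟨t, by omega⟩ := by
    intro t ht
    simp only [m]
    congr 2
    omega
  have hmlt : ∀ i j, i < j → j ≤ h → m i < m j := by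
    intro i j hij hj
    rw [hmn i (by omega), hmn j hj]
    exact hn (by rw [Fin.lt_def]; exact hij)
  have hfl : ∀ i j, i < j → j ≤ h →
      (((List.ofFn fun t : Fin h => seg y (m t) (m (t + 1) - m t)).take j).drop i).flatten
        = seg y (m i) (m j - m i) := by
    intro i j hij hj
    rw [aux_ofFn (fun t => seg y (m t) (m (t + 1) - m t)) h i j hj, aux_flatten y m hm]
    congr 3
    omega
  have hm0 : m 0 = 0 := by rw [hmn 0 (by omega)]; exact hn0
  have hmh := hmlt 0 h (by omega) le_rfl
  have hw : (List.ofFn fun t : Fin h => seg y (m t) (m (t + 1) - m t)).flatten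
      = seg y 0 (m h) := by
    have h1 := hfl 0 h (by omega) le_rfl
    rw [List.drop_zero, List.take_of_length_le (by simp), hm0] at h1
    simpa using h1
  refine ⟨seg y 0 (m h), (aux_factor y 0 (m h) (by omega)).1, ?_,
    fun t => ⟨seg y (m t) (m (t + 1) - m t), aux_factor _ _ _ ?_⟩, hw.symm,
    ct (seg y (n 0) (n l - n 0)), ?_⟩
  · unfold IsPrefixOf
    rw [aux_length]
  · have := hmlt t (t + 1) (by omega) (by omega)
    omega
  · intro i j hij hj hf
    rw [hct]
    simp only
    rw [hfl i j hij hj, hmn i (by omega), hmn j hj]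
    exact key _ _ (by rw [Fin.lt_def]; exact hij)
end
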